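/- arXiv:1901.03168 — 3 statements merged into one kernel-verified Lean document; each statement's English description precedes it below -/
import Mathlib

section
/- Let A be an associative unital ring and T a classical 1-tilting left A-module. Set KE_0(T) = {X ∈ A-Mod : Ext_A^1(T,X) = 0} and KE_1(T) = {X ∈ A-Mod : Hom_A(T,X) = 0}. Then (KE_0(T), KE_1(T)) is a torsion pair in A-Mod: Hom_A(X,Y) = 0 for every X ∈ KE_0(T) and Y ∈ KE_1(T), and every left A-module M fits into a short exact sequence 0 → tM → M → M/tM → 0 with tM ∈ KE_0(T) and M/tM ∈ KE_1(T). -/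
set_option maxHeartbeats 1000000
set_option synthInstance.maxHeartbeats 400000
open CategoryTheory Limits
universe u
variable (A : Type u) [Ring A]
noncomputable instance : HasDerivedCategory (ModuleCat.{u} A) := HasDerivedCategory.standard _
instance : HasExt.{u+1} (ModuleCat.{u} A) := hasExt_of_hasDerivedCategory _

/-- `X` is a direct summand of a coproduct of copies of `T`. -/
def IsSummandOfCopies (T X : Type u) [AddCommGroup T] [Module A T]
    [AddCommGroup X] [Module A X] : Prop :=
  ∃ (ι : Type u) (s : X →ₗ[A] (ι →₀ T)) (r : (ι →₀ T) →ₗ[A] X),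
    r.comp s = LinearMap.id

/-- `T` is a classical `n`-tilting left `A`-module. -/
structure IsClassicalTilting (T : Type u) [AddCommGroup T] [Module A T] (n : ℕ) : Prop where
  /-- `p_n`: a projective resolution of length `n` by finitely generated projectives -/
  proj_res : ∃ pr : ProjectiveResolution (ModuleCat.of A T),
      (∀ i, Module.Finite A (pr.complex.X i)) ∧ ∀ i, n < i → IsZero (pr.complex.X i)
  /-- `e_n`: rigidity -/
  rigid : ∀ i, 0 < i → i ≤ n →
      Subsingleton (Abelian.Ext (ModuleCat.of A T) (ModuleCat.of A T) i)
  /-- `g_n`: a coresolution `0 → A → T_0 → ⋯ → T_n → 0` by finitely generated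
  direct summands of coproducts of copies of `T` -/
  cores : ∃ S : ComposableArrows (ModuleCat.{u} A) (n+3),
      S.Exact ∧ IsZero (S.obj' 0) ∧ IsZero (S.obj' (n+3)) ∧
      S.obj' 1 = ModuleCat.of A A ∧
      ∀ i, (h : i ≤ n) → Module.Finite A (S.obj' (i+2) (by omega)) ∧
        IsSummandOfCopies A T (S.obj' (i+2) (by omega))

/-!
`Ext¹(-, X)` vanishes on every summand of a coproduct of copies of `T` as soon as it vanishes on
`T`, so if `Ext¹(T, X) = 0` every map `A → X` extends along the coresolution `0 → A → T₀ → T₁ → 0`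
to `T₀`. Hence every element of `X` lies in the image of a map out of a summand of copies of `T`:
`X` equals its `T`-trace, and a map from `X` to `Y` vanishes when `Hom(T, Y) = 0`.

For the decomposition take `tM` to be the `T`-trace of `M`. It is a quotient of a coproduct of
copies of `T`, and `Ext¹(T, -)` is right exact since `T` has projective dimension at most one; so
`Ext¹(T, tM) = 0`. Therefore every map `T → M/tM` lifts to `M`, where it lands in `tM`.
-/

open Abelian

universe w

section AbelianCategory

variable {C : Type*} [Category* C] [Abelian C]

theorem shortExact_d_π_of_isZero {Z : C} (P : ProjectiveResolution Z)
    (h : IsZero (P.complex.X 2)) :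
    (ShortComplex.mk (X₃ := Z) (P.complex.d 1 0) (P.π.f 0)
      P.complex_d_comp_π_f_zero).ShortExact where
  exact := P.exact₀
  mono_f := (P.exact_succ 0).mono_g (h.eq_of_src _ _)
  epi_g := inferInstanceAs (Epi (P.π.f 0))

theorem shortExact_sc_one_of_isZero {S : ComposableArrows C 4} (hS : S.Exact)
    (h₀ : IsZero (S.obj' 0)) (h₄ : IsZero (S.obj' 4)) : (S.sc hS.toIsComplex 1).ShortExact where
  exact := hS.exact 1
  mono_f := (hS.exact 0).mono_g (h₀.eq_of_src _ _)
  epi_g := (hS.exact 2).epi_f (h₄.eq_of_tgt _ _)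

variable [HasExt.{w} C]

theorem exists_lift_of_subsingleton_ext_one {S : ShortComplex C} (hS : S.ShortExact) {Z : C}
    [Subsingleton (Ext Z S.X₁ 1)] (g : Z ⟶ S.X₃) : ∃ h : Z ⟶ S.X₂, h ≫ S.g = g := by
  obtain ⟨e, he⟩ := Ext.covariant_sequence_exact₃ Z hS (Ext.mk₀ g) (zero_add 1)
    (Subsingleton.elim _ _)
  obtain ⟨h, rfl⟩ := (Ext.mk₀_bijective _ _).surjective e
  exact ⟨h, (Ext.mk₀_bijective _ _).injective (by rw [← Ext.mk₀_comp_mk₀, he])⟩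

theorem exists_extension_of_subsingleton_ext_one {S : ShortComplex C} (hS : S.ShortExact) {X : C}
    [Subsingleton (Ext S.X₃ X 1)] (g : S.X₁ ⟶ X) : ∃ h : S.X₂ ⟶ X, S.f ≫ h = g := by
  obtain ⟨e, he⟩ := Ext.contravariant_sequence_exact₁ hS X (Ext.mk₀ g) (add_zero 1)
    (Subsingleton.elim _ _)
  obtain ⟨h, rfl⟩ := (Ext.mk₀_bijective _ _).surjective e
  exact ⟨h, (Ext.mk₀_bijective _ _).injective (by rw [← Ext.mk₀_comp_mk₀, he])⟩

theorem subsingleton_ext_one_of_forall_exists_lift {S : ShortComplex C} (hS : S.ShortExact)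
    [Injective S.X₂] {Z : C} (H : ∀ g : Z ⟶ S.X₃, ∃ h : Z ⟶ S.X₂, h ≫ S.g = g) :
    Subsingleton (Ext Z S.X₁ 1) := by
  refine subsingleton_of_forall_eq 0 fun x => ?_
  obtain ⟨e, rfl⟩ := Ext.covariant_sequence_exact₁ Z hS x (Ext.eq_zero_of_injective _) (zero_add 1)
  obtain ⟨g, rfl⟩ := (Ext.mk₀_bijective _ _).surjective e
  obtain ⟨h, rfl⟩ := H g
  rw [← Ext.mk₀_comp_mk₀, Ext.comp_assoc_of_second_deg_zero, hS.comp_extClass, Ext.comp_zero]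

theorem subsingleton_ext_one_of_forall_exists_extension {S : ShortComplex C} (hS : S.ShortExact)
    [Projective S.X₂] {X : C} (H : ∀ g : S.X₁ ⟶ X, ∃ h : S.X₂ ⟶ X, S.f ≫ h = g) :
    Subsingleton (Ext S.X₃ X 1) := by
  refine subsingleton_of_forall_eq 0 fun x => ?_
  obtain ⟨e, rfl⟩ := Ext.contravariant_sequence_exact₃ hS X x (Ext.eq_zero_of_projective _)
    (add_zero 1)
  obtain ⟨g, rfl⟩ := (Ext.mk₀_bijective _ _).surjective e
  obtain ⟨h, rfl⟩ := H g
  rw [← Ext.mk₀_comp_mk₀, hS.extClass_comp_assoc]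

theorem subsingleton_ext_of_retract {Z Z' X : C} {n : ℕ} (r : Retract Z Z')
    [Subsingleton (Ext Z' X n)] : Subsingleton (Ext Z X n) := by
  refine subsingleton_of_forall_eq 0 fun x => ?_
  calc x = (Ext.mk₀ (r.i ≫ r.r)).comp x (zero_add n) := by rw [r.retract, Ext.mk₀_id_comp]
    _ = (Ext.mk₀ r.i).comp ((Ext.mk₀ r.r).comp x (zero_add n)) (zero_add n) :=
      (Ext.mk₀_comp_mk₀_assoc _ _ _).symm
    _ = 0 := by rw [Subsingleton.elim ((Ext.mk₀ r.r).comp x (zero_add n)) 0, Ext.comp_zero]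

theorem subsingleton_ext_of_epi {Z X Y : C} {n : ℕ} [HasProjectiveDimensionLE Z n] (q : X ⟶ Y)
    [Epi q] [Subsingleton (Ext Z X n)] : Subsingleton (Ext Z Y n) := by
  have hS : (ShortComplex.mk (kernel.ι q) q (kernel.condition q)).ShortExact :=
    { exact := ShortComplex.exact_kernel q }
  refine subsingleton_of_forall_eq 0 fun y => ?_
  obtain ⟨x, rfl⟩ := Ext.covariant_sequence_exact₃ Z hS y rfl
    (Ext.eq_zero_of_hasProjectiveDimensionLT _ (n + 1) le_rfl)
  rw [Subsingleton.elim x 0, Ext.zero_comp]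

end AbelianCategory

theorem exists_finset_sum_lsingle_comp_lapply {R ι K X : Type*} [Semiring R] [AddCommMonoid K]
    [Module R K] [Module.Finite R K] [AddCommMonoid X] [Module R X] (g : K →ₗ[R] (ι →₀ X)) :
    ∃ s : Finset ι, ∑ i ∈ s, Finsupp.lsingle i ∘ₗ Finsupp.lapply i ∘ₗ g = g := by
  classical
  obtain ⟨t, ht⟩ := Module.Finite.fg_top (R := R) (M := K)
  refine ⟨t.biUnion fun x => (g x).support, LinearMap.ext_on ht fun x hx => ?_⟩
  have hsupp : (g x).support ⊆ t.biUnion fun y => (g y).support :=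
    Finset.subset_biUnion_of_mem (fun y => (g y).support) hx
  calc (∑ i ∈ t.biUnion fun y => (g y).support, Finsupp.lsingle i ∘ₗ Finsupp.lapply i ∘ₗ g) x
      = ∑ i ∈ t.biUnion fun y => (g y).support, Finsupp.single i (g x i) := by
        simp only [LinearMap.sum_apply, LinearMap.comp_apply, Finsupp.lsingle_apply,
          Finsupp.lapply_apply]
    _ = (g x).sum Finsupp.single :=
        (Finsupp.sum_of_support_subset _ hsupp _ fun i _ => Finsupp.single_zero i).symm
    _ = g x := Finsupp.sum_single _

section Trace

variable {R : Type*} [Semiring R] (T : Type*) [AddCommMonoid T] [Module R T]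
  {M N : Type*} [AddCommMonoid M] [Module R M] [AddCommMonoid N] [Module R N]

variable (R M) in
/-- The trace of `T` in `M`: the submodule of `M` generated by the images of all maps `T → M`. For a
tilting module `T` it is the torsion part of `M`. -/
def traceSubmodule : Submodule R M := ⨆ g : T →ₗ[R] M, LinearMap.range g

variable {T} in
theorem apply_mem_traceSubmodule (g : T →ₗ[R] M) (t : T) : g t ∈ traceSubmodule R T M :=
  le_iSup (fun g : T →ₗ[R] M => LinearMap.range g) g ⟨t, rfl⟩

theorem map_traceSubmodule_le (f : M →ₗ[R] N) :
    (traceSubmodule R T M).map f ≤ traceSubmodule R T N := by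
  rw [traceSubmodule, Submodule.map_iSup, iSup_le_iff]
  rintro g _ ⟨_, ⟨t, rfl⟩, rfl⟩
  exact apply_mem_traceSubmodule (f ∘ₗ g) t

theorem traceSubmodule_eq_bot (h : ∀ g : T →ₗ[R] M, g = 0) : traceSubmodule R T M = ⊥ :=
  iSup_eq_bot.2 fun g => by rw [h g, LinearMap.range_zero]

theorem traceSubmodule_finsupp (ι : Type*) : traceSubmodule R T (ι →₀ T) = ⊤ :=
  top_unique <| (Finsupp.iSup_lsingle_range (R := R) (M := T) (α := ι)).ge.trans <|
    iSup_le fun i => le_iSup (fun g : T →ₗ[R] (ι →₀ T) => LinearMap.range g) (Finsupp.lsingle i)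

theorem range_lsum_id_eq_traceSubmodule :
    LinearMap.range (Finsupp.lsum ℕ fun g : T →ₗ[R] M => g) = traceSubmodule R T M := by
  apply le_antisymm
  · rw [LinearMap.range_eq_map, ← traceSubmodule_finsupp]
    exact map_traceSubmodule_le T _
  · refine iSup_le fun g => ?_
    rintro _ ⟨t, rfl⟩
    exact ⟨Finsupp.single g t, by simp⟩

end Trace

section Modules

variable {A}

theorem shortExact_subtype_mkQ {M : Type u} [AddCommGroup M] [Module A M] (N : Submodule A M) :
    (ShortComplex.mk (ModuleCat.ofHom N.subtype) (ModuleCat.ofHom N.mkQ)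
      (by ext x; simp)).ShortExact where
  exact := (ShortComplex.ShortExact.moduleCat_exact_iff_function_exact _).2
    (LinearMap.exact_subtype_mkQ N)
  mono_f := (ModuleCat.mono_iff_injective _).2 N.subtype_injective
  epi_g := (ModuleCat.epi_iff_surjective _).2 N.mkQ_surjective

theorem subsingleton_ext_one_finsupp_left (Z X : ModuleCat.{u} A) [Subsingleton (Ext Z X 1)]
    (ι : Type u) : Subsingleton (Ext (ModuleCat.of A (ι →₀ Z)) X 1) := by
  obtain ⟨I⟩ := EnoughInjectives.presentation X
  have : Injective I.shortComplex.X₂ := I.injective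
  refine subsingleton_ext_one_of_forall_exists_lift I.shortExact_shortComplex fun g => ?_
  choose h hh using fun i : ι => exists_lift_of_subsingleton_ext_one I.shortExact_shortComplex
    (Z := Z) (ModuleCat.ofHom (g.hom ∘ₗ Finsupp.lsingle i))
  refine ⟨ModuleCat.ofHom (Finsupp.lsum ℕ fun i => (h i).hom), ?_⟩
  ext i z
  simpa using ConcreteCategory.congr_hom (hh i) z

theorem subsingleton_ext_one_finsupp_right {S : ShortComplex (ModuleCat.{u} A)}
    (hS : S.ShortExact) [Projective S.X₂] [Module.Finite A S.X₁] (X : ModuleCat.{u} A)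
    [Subsingleton (Ext S.X₃ X 1)] (ι : Type u) :
    Subsingleton (Ext S.X₃ (ModuleCat.of A (ι →₀ X)) 1) := by
  refine subsingleton_ext_one_of_forall_exists_extension hS fun g => ?_
  obtain ⟨s, hs⟩ := exists_finset_sum_lsingle_comp_lapply g.hom
  choose h hh using fun i : ι => exists_extension_of_subsingleton_ext_one hS (X := X)
    (ModuleCat.ofHom (Finsupp.lapply i ∘ₗ g.hom))
  refine ⟨ModuleCat.ofHom (∑ i ∈ s, Finsupp.lsingle i ∘ₗ (h i).hom), ?_⟩
  ext x : 2
  have hx (i : ι) : (h i).hom (S.f.hom x) = g.hom x i := ConcreteCategory.congr_hom (hh i) x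
  conv_rhs => rw [← hs]
  simp [hx]

variable {T : Type u} [AddCommGroup T] [Module A T]

theorem IsSummandOfCopies.subsingleton_ext_one {Z : ModuleCat.{u} A} (hZ : IsSummandOfCopies A T Z)
    {X : ModuleCat.{u} A} [Subsingleton (Ext (ModuleCat.of A T) X 1)] :
    Subsingleton (Ext Z X 1) := by
  obtain ⟨ι, s, r, hrs⟩ := hZ
  have := subsingleton_ext_one_finsupp_left (ModuleCat.of A T) X ι
  exact subsingleton_ext_of_retract (Z' := ModuleCat.of A (ι →₀ T))
    ⟨ModuleCat.ofHom s, ModuleCat.ofHom r, ModuleCat.hom_ext hrs⟩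

theorem IsSummandOfCopies.traceSubmodule_eq_top {X : Type u} [AddCommGroup X] [Module A X]
    (hX : IsSummandOfCopies A T X) : traceSubmodule A T X = ⊤ := by
  obtain ⟨ι, s, r, hrs⟩ := hX
  have hr : Function.Surjective r := fun x => ⟨s x, LinearMap.congr_fun hrs x⟩
  rw [← top_le_iff, ← LinearMap.range_eq_top.2 hr, LinearMap.range_eq_map,
    ← traceSubmodule_finsupp]
  exact map_traceSubmodule_le T r

end Modules

/-- `T` is a 1-tilting left `A`-module, not necessarily finitely generated. The coresolution of the
regular module is a short exact sequence `S` whose first term is only isomorphic to `A`. -/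
structure IsOneTilting (T : Type u) [AddCommGroup T] [Module A T] : Prop where
  hasProjectiveDimensionLE : HasProjectiveDimensionLE (ModuleCat.of A T) 1
  subsingleton_ext_finsupp (ι : Type u) :
    Subsingleton (Ext (ModuleCat.of A T) (ModuleCat.of A (ι →₀ T)) 1)
  exists_coresolution : ∃ S : ShortComplex (ModuleCat.{u} A), S.ShortExact ∧
    Nonempty (ModuleCat.of A A ≅ S.X₁) ∧ IsSummandOfCopies A T S.X₂ ∧ IsSummandOfCopies A T S.X₃

section Tilting

variable {A} {T : Type u} [AddCommGroup T] [Module A T]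

theorem IsClassicalTilting.isOneTilting (hT : IsClassicalTilting A T 1) : IsOneTilting A T := by
  obtain ⟨P, hfin, hzero⟩ := hT.proj_res
  obtain ⟨S, hS, h₀, h₄, h₁, hsummand⟩ := hT.cores
  have hP := shortExact_d_π_of_isZero P (hzero 2 one_lt_two)
  have : Projective (P.complex.X 1) := P.projective 1
  have : Projective (P.complex.X 0) := P.projective 0
  have : Module.Finite A (P.complex.X 1) := hfin 1
  have : Subsingleton (Ext (ModuleCat.of A T) (ModuleCat.of A T) 1) := hT.rigid 1 one_pos le_rfl
  exact
    { hasProjectiveDimensionLE := hP.hasProjectiveDimensionLT_X₃ 1 inferInstance inferInstance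
      subsingleton_ext_finsupp := subsingleton_ext_one_finsupp_right hP (ModuleCat.of A T)
      exists_coresolution := ⟨_, shortExact_sc_one_of_isZero hS h₀ h₄, ⟨eqToIso h₁.symm⟩,
        (hsummand 0 zero_le_one).2, (hsummand 1 le_rfl).2⟩ }

namespace IsOneTilting

variable {M : Type u} [AddCommGroup M] [Module A M]

theorem traceSubmodule_eq_top (hT : IsOneTilting A T)
    [Subsingleton (Ext (ModuleCat.of A T) (ModuleCat.of A M) 1)] : traceSubmodule A T M = ⊤ := by
  obtain ⟨S, hS, ⟨e⟩, h₂, h₃⟩ := hT.exists_coresolution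
  have : Subsingleton (Ext S.X₃ (ModuleCat.of A M) 1) := h₃.subsingleton_ext_one
  refine Submodule.eq_top_iff'.2 fun x => ?_
  obtain ⟨h, hh⟩ := exists_extension_of_subsingleton_ext_one hS (X := ModuleCat.of A M)
    (e.inv ≫ ModuleCat.ofHom (LinearMap.toSpanSingleton A M x))
  have hx : h.hom (S.f.hom (e.hom.hom 1)) = x := by
    simpa using ConcreteCategory.congr_hom hh (e.hom.hom 1)
  rw [← hx]
  exact map_traceSubmodule_le T h.hom
    (Submodule.mem_map_of_mem (h₂.traceSubmodule_eq_top ▸ Submodule.mem_top))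

theorem subsingleton_ext_traceSubmodule (hT : IsOneTilting A T) :
    Subsingleton (Ext (ModuleCat.of A T) (ModuleCat.of A (traceSubmodule A T M)) 1) := by
  have := hT.hasProjectiveDimensionLE
  have := hT.subsingleton_ext_finsupp (T →ₗ[A] M)
  rw [← range_lsum_id_eq_traceSubmodule]
  let q := ModuleCat.ofHom (Finsupp.lsum ℕ fun g : T →ₗ[A] M => g).rangeRestrict
  have : Epi q := (ModuleCat.epi_iff_surjective _).2 (LinearMap.surjective_rangeRestrict _)
  exact subsingleton_ext_of_epi q

theorem hom_quotient_traceSubmodule_eq_zero (hT : IsOneTilting A T)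
    (g : T →ₗ[A] M ⧸ traceSubmodule A T M) : g = 0 := by
  have := hT.subsingleton_ext_traceSubmodule (M := M)
  obtain ⟨h, hh⟩ := exists_lift_of_subsingleton_ext_one
    (shortExact_subtype_mkQ (traceSubmodule A T M)) (ModuleCat.ofHom g)
  ext t
  calc g t = (traceSubmodule A T M).mkQ (h.hom t) := (ConcreteCategory.congr_hom hh t).symm
    _ = 0 := (Submodule.Quotient.mk_eq_zero _).2 (apply_mem_traceSubmodule h.hom t)

theorem hom_eq_zero (hT : IsOneTilting A T) {N : Type u} [AddCommGroup N] [Module A N]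
    [Subsingleton (Ext (ModuleCat.of A T) (ModuleCat.of A M) 1)] (hN : ∀ g : T →ₗ[A] N, g = 0)
    (f : M →ₗ[A] N) : f = 0 := by
  have hle := map_traceSubmodule_le T f
  rw [hT.traceSubmodule_eq_top, traceSubmodule_eq_bot T hN, ← LinearMap.range_eq_map] at hle
  exact LinearMap.range_eq_bot.1 (le_bot_iff.1 hle)

end IsOneTilting

end Tilting

theorem stmt0_general (T : Type u) [AddCommGroup T] [Module A T]
    (hT : IsOneTilting A T) :
    (∀ (X Y : Type u) [AddCommGroup X] [Module A X] [AddCommGroup Y] [Module A Y],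
        Subsingleton (Abelian.Ext (ModuleCat.of A T) (ModuleCat.of A X) 1) →
        (∀ g : T →ₗ[A] Y, g = 0) →
        ∀ f : X →ₗ[A] Y, f = 0) ∧
    (∀ (M : Type u) [AddCommGroup M] [Module A M],
        ∃ tM : Submodule A M,
          Subsingleton (Abelian.Ext (ModuleCat.of A T) (ModuleCat.of A tM) 1) ∧
          (∀ g : T →ₗ[A] (M ⧸ tM), g = 0)) :=
  ⟨fun _ _ _ _ _ _ _ hY => hT.hom_eq_zero hY, fun M _ _ => ⟨traceSubmodule A T M,
    hT.subsingleton_ext_traceSubmodule, hT.hom_quotient_traceSubmodule_eq_zero⟩⟩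

/-- For a classical 1-tilting module `T`, the pair
`(KE_0(T), KE_1(T))` is a torsion pair in `A`-Mod. -/
theorem stmt0 (T : Type u) [AddCommGroup T] [Module A T]
    (hT : IsClassicalTilting A T 1) :
    -- Hom-vanishing: `Hom_A(X, Y) = 0` for `X ∈ KE_0(T)`, `Y ∈ KE_1(T)`
    (∀ (X Y : Type u) [AddCommGroup X] [Module A X] [AddCommGroup Y] [Module A Y],
        Subsingleton (Abelian.Ext (ModuleCat.of A T) (ModuleCat.of A X) 1) →
        (∀ g : T →ₗ[A] Y, g = 0) →
        ∀ f : X →ₗ[A] Y, f = 0) ∧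
    -- decomposition: every `M` has a submodule `tM ∈ KE_0(T)` with `M/tM ∈ KE_1(T)`
    (∀ (M : Type u) [AddCommGroup M] [Module A M],
        ∃ tM : Submodule A M,
          Subsingleton (Abelian.Ext (ModuleCat.of A T) (ModuleCat.of A tM) 1) ∧
          (∀ g : T →ₗ[A] (M ⧸ tM), g = 0)) := by
  exact stmt0_general A T hT.isOneTilting
end

section
/- Let A be an associative unital ring, T an n-tilting left A-module, (T^{≤0}, T^{≥0}) the associated t-structure on D(A) and (D^{≤0}, D^{≥0}) the natural t-structure. Then D^{≤-n} ⊆ T^{≤0} ⊆ D^{≤0} and D^{≥0} ⊆ T^{≥0} ⊆ D^{≥-n}. -/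
set_option maxHeartbeats 1000000
set_option synthInstance.maxHeartbeats 400000
open CategoryTheory Limits Triangulated Pretriangulated
universe u
variable (A : Type u) [Ring A]
/-- The derived category `D(A)` of `A`-Mod. -/
abbrev DA := DerivedCategory (ModuleCat.{u} A)

variable (T : Type u) [AddCommGroup T] [Module A T]

/-- `T`, viewed as the complex `T[0]` in `D(A)`. -/
noncomputable def Tsingle : DA A :=
  (DerivedCategory.singleFunctor (ModuleCat.{u} A) 0).obj (ModuleCat.of A T)

/-- `T` is an `n`-tilting module (not necessarily classical):
`(P_n)` the projective dimension of `T` is at most `n`;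
`(E_n)` `Ext_A^i(T, T^{(Λ)}) = 0` for `0 < i ≤ n` and every set `Λ`;
`(G_n)` `T` generates `D(A)`. -/
structure IsTilting (n : ℕ) : Prop where
  pdim : ∃ pr : ProjectiveResolution (ModuleCat.of A T),
      ∀ i, n < i → IsZero (pr.complex.X i)
  rigid : ∀ i : ℕ, 0 < i → i ≤ n → ∀ Λ : Type u,
      Subsingleton (Abelian.Ext (ModuleCat.of A T) (ModuleCat.of A (Λ →₀ T)) i)
  generates : ∀ X : DA A, (∀ i : ℤ, ∀ f : Tsingle A T ⟶ X⟦i⟧, f = 0) → IsZero X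

/-- Membership in `T^{≤k}`: `Hom_{D(A)}(T, X[i]) = 0` for every `i > k`. -/
def tLE (k : ℤ) (X : DA A) : Prop :=
  ∀ i : ℤ, k < i → ∀ f : Tsingle A T ⟶ X⟦i⟧, f = 0

/-- Membership in `T^{≥k}`: `Hom_{D(A)}(T, X[i]) = 0` for every `i < k`. -/
def tGE (k : ℤ) (X : DA A) : Prop :=
  ∀ i : ℤ, i < k → ∀ f : Tsingle A T ⟶ X⟦i⟧, f = 0

/-- Membership in `D^{≤k}` for the natural t-structure:
`H^i(X) = 0` for every `i > k`. -/
def dLE (k : ℤ) (X : DA A) : Prop :=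
  ∀ i : ℤ, k < i →
    IsZero ((DerivedCategory.homologyFunctor (ModuleCat.{u} A) i).obj X)

/-- Membership in `D^{≥k}` for the natural t-structure:
`H^i(X) = 0` for every `i < k`. -/
def dGE (k : ℤ) (X : DA A) : Prop :=
  ∀ i : ℤ, i < k →
    IsZero ((DerivedCategory.homologyFunctor (ModuleCat.{u} A) i).obj X)

/-!
Replace `T` by a bounded K-projective complex `P`. Starting from any complex `L`, kill successively
all morphisms from `P[s]`, `P[s+1]`, ... by attaching cones of universal maps from coproducts of
shifts of `P`. Rigidity ensures that morphisms killed at one stage do not reappear. As each stage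
changes the complex only in degrees which go to `-∞`, every morphism from a shift of `P` to the
colimit comes from a stage. If there are no nonzero morphisms `P[i] ⟶ L` for `i < s`, the colimit is
therefore orthogonal to all the shifts of `P`, hence acyclic because `P` generates; but it has the
same cohomology as `L` in high degrees, so that this cohomology vanishes: this gives
`T^{≤0} ⊆ D^{≤0}`.

For `X` in `T^{≥0}`, apply the construction to the truncation `Y` of `X` in degrees `< -n`, killing
the morphisms from `P[1]`, `P[2]`, ... The morphism `Y ⟶ X` extends to all the stages, and late
stages are so far to the left that the extension factors through `Y`. Thus `Y` is a retract of
stages which receive no nonzero morphism from any given shift of `P`, and `Y = 0`.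
-/

section Homotopy

variable {C : Type*} [Category* C] [Preadditive C] [HasBinaryBiproducts C]
  {ι : Type*} {c : ComplexShape ι}

open HomologicalComplex in
lemma nonempty_homotopy_sigma_zero (hc : ∀ i, ∃ j, c.Rel i j) {Λ : Type*}
    {K : Λ → HomologicalComplex C c} [HasCoproduct K] {L : HomologicalComplex C c} (f : ∐ K ⟶ L)
    (hf : ∀ l, Nonempty (Homotopy (Sigma.ι K l ≫ f) 0)) : Nonempty (Homotopy f 0) := by
  classical
  let g : ∐ K ⟶ L.pathObject := Sigma.desc fun l => pathObject.lift _ _ (hf l).some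
  have hg₀ : g ≫ pathObject.π₀ L = f := Sigma.hom_ext _ _ fun l => by simp [g]
  have hg₁ : g ≫ pathObject.π₁ L = 0 := Sigma.hom_ext _ _ fun l => by simp [g]
  exact ⟨(Homotopy.ofEq hg₀.symm).trans
    (((pathObject.homotopy₀₁ L hc).compLeft g).trans (Homotopy.ofEq hg₁))⟩

end Homotopy

section Derived

open DerivedCategory

universe w v u'

variable {C : Type u'} [Category.{v} C] [Abelian C]

lemma isKProjective_sigma {Λ : Type*} (K : Λ → CochainComplex C ℤ) [HasCoproduct K]
    [∀ l, (K l).IsKProjective] : (∐ K).IsKProjective where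
  nonempty_homotopy_zero f hL := nonempty_homotopy_sigma_zero (fun i => ⟨i + 1, rfl⟩) f fun _ =>
    CochainComplex.IsKProjective.nonempty_homotopy_zero _ hL

variable [HasDerivedCategory.{w} C]

lemma exists_Q_map_eq {K L : CochainComplex C ℤ} [K.IsKProjective] (f : Q.obj K ⟶ Q.obj L) :
    ∃ g : K ⟶ L, Q.map g = f := by
  obtain ⟨g, hg⟩ := (CochainComplex.IsKProjective.Qh_map_bijective K
    ((HomotopyCategory.quotient _ _).obj L)).surjective
    ((quotientCompQhIso C).hom.app K ≫ f ≫ (quotientCompQhIso C).inv.app L)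
  obtain ⟨g, rfl⟩ := (HomotopyCategory.quotient _ _).map_surjective g
  refine ⟨g, ?_⟩
  rw [← cancel_epi ((quotientCompQhIso C).hom.app K), ← quotientCompQhIso_hom_naturality, hg]
  simp

lemma Q_map_eq_zero_iff {K L : CochainComplex C ℤ} [K.IsKProjective] (g : K ⟶ L) :
    Q.map g = 0 ↔ Nonempty (Homotopy g 0) := by
  refine ⟨fun h => ⟨HomotopyCategory.homotopyOfEq _ _ ?_⟩, fun ⟨h⟩ => ?_⟩
  · apply (CochainComplex.IsKProjective.Qh_map_bijective K
      ((HomotopyCategory.quotient _ _).obj L)).injective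
    rw [← cancel_mono ((quotientCompQhIso C).hom.app L), quotientCompQhIso_hom_naturality, h]
    simp
  · rw [← cancel_epi ((quotientCompQhIso C).hom.app K), ← quotientCompQhIso_hom_naturality,
      HomotopyCategory.eq_of_homotopy _ _ h]
    simp

lemma subsingleton_Q_obj_sigma_hom {Λ : Type*} (K : Λ → CochainComplex C ℤ) [HasCoproduct K]
    [∀ l, (K l).IsKProjective] (X : DerivedCategory C) [∀ l, Subsingleton (Q.obj (K l) ⟶ X)] :
    Subsingleton (Q.obj (∐ K) ⟶ X) := by
  refine subsingleton_of_forall_eq 0 fun f => ?_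
  have := isKProjective_sigma K
  obtain ⟨g, hg⟩ := exists_Q_map_eq (f ≫ (Q.objObjPreimageIso X).inv)
  have hg_zero : Q.map g = 0 := by
    rw [Q_map_eq_zero_iff]
    refine nonempty_homotopy_sigma_zero (fun i => ⟨i + 1, rfl⟩) g fun l => ?_
    rw [← Q_map_eq_zero_iff, Functor.map_comp, hg, ← Category.assoc, Subsingleton.elim (_ ≫ f) 0,
      zero_comp]
  rw [← cancel_mono (Q.objObjPreimageIso X).inv, ← hg, hg_zero, zero_comp]

end Derived

section Degrees

open DerivedCategory

universe w v u'

variable {C : Type u'} [Category.{v} C] [Abelian C]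

lemma exists_lift_of_isStrictlyGE {K L M : CochainComplex C ℤ} (m : ℤ) [K.IsStrictlyGE m]
    (φ : L ⟶ M) (hφ : ∀ j, m ≤ j → IsIso (φ.f j)) (g : K ⟶ M) : ∃ g' : K ⟶ L, g' ≫ φ = g := by
  have exists_degreewise (j : ℤ) : ∃ a : K.X j ⟶ L.X j, a ≫ φ.f j = g.f j := by
    by_cases hj : m ≤ j
    · have := hφ j hj
      exact ⟨g.f j ≫ inv (φ.f j), by simp⟩
    · exact ⟨0, (K.isZero_of_isStrictlyGE m j (by lia)).eq_of_src _ _⟩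
  choose a ha using exists_degreewise
  refine ⟨{ f := a, comm' := fun i j (hij : i + 1 = j) => ?_ }, HomologicalComplex.hom_ext _ _ ha⟩
  by_cases hi : m ≤ i
  · have := hφ j (by lia)
    rw [← cancel_mono (φ.f j), Category.assoc, Category.assoc, ha, ← φ.comm, reassoc_of% ha, g.comm]
  · exact (K.isZero_of_isStrictlyGE m i (by lia)).eq_of_src _ _

lemma quasiIsoAt_of_isIso_f {K L : CochainComplex C ℤ} (φ : K ⟶ L) (i : ℤ)
    [IsIso (φ.f (i - 1))] [IsIso (φ.f i)] [IsIso (φ.f (i + 1))] : QuasiIsoAt φ i := by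
  rw [quasiIsoAt_iff' _ (i - 1) i (i + 1) (by simp) (by simp)]
  let ψ := (HomologicalComplex.shortComplexFunctor' C (.up ℤ) (i - 1) i (i + 1)).map φ
  have : IsIso ψ.τ₁ := ‹IsIso (φ.f (i - 1))›
  have : IsIso ψ.τ₂ := ‹IsIso (φ.f i)›
  have : IsIso ψ.τ₃ := ‹IsIso (φ.f (i + 1))›
  exact ShortComplex.quasiIso_of_epi_of_isIso_of_mono ψ

variable [HasDerivedCategory.{w} C]

lemma subsingleton_Q_obj_hom_of_isStrictlyGE_of_isLE (K : CochainComplex C ℤ) [K.IsKProjective]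
    (a m : ℤ) (hma : m < a) [K.IsStrictlyGE a] (X : DerivedCategory C) [X.IsLE m] :
    Subsingleton (Q.obj K ⟶ X) := by
  obtain ⟨L, hL, ⟨e⟩⟩ := X.exists_iso_Q_obj_of_isLE m
  rw [(Iso.homCongr (Iso.refl _) e).subsingleton_congr]
  refine subsingleton_of_forall_eq 0 fun f => ?_
  obtain ⟨g, rfl⟩ := exists_Q_map_eq f
  suffices g = 0 by rw [this, Functor.map_zero]
  ext1 j
  by_cases hj : m < j
  · exact (L.isZero_of_isStrictlyLE m j hj).eq_of_tgt _ _
  · exact (K.isZero_of_isStrictlyGE a j (by lia)).eq_of_src _ _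

end Degrees

section EvalCone

open DerivedCategory CochainComplex

universe w v u'

variable {C : Type u'} [Category.{v} C] [Abelian C] [HasCoproducts.{v} C]
  (K L : CochainComplex C ℤ)

/-- The universal morphism to `L` from a coproduct of copies of `K`, indexed by all the morphisms
`K ⟶ L`. -/
noncomputable def evalMap : ∐ (fun _ : K ⟶ L => K) ⟶ L := Sigma.desc id

/-- The cone of `evalMap K L`: the complex obtained from `L` by killing all morphisms `K ⟶ L`. -/
noncomputable def evalCone : CochainComplex C ℤ := mappingCone (evalMap K L)

/-- The inclusion of `L` in `evalCone K L`. -/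
noncomputable def evalConeInr : L ⟶ evalCone K L := mappingCone.inr (evalMap K L)

lemma isIso_evalConeInr_f (j : ℤ) (hK : IsZero (K.X (j + 1))) :
    IsIso ((evalConeInr K L).f j) := by
  have hcop : IsZero ((∐ (fun _ : K ⟶ L => K)).X (j + 1)) := by
    rw [IsZero.iff_id_eq_zero]
    let E := HomologicalComplex.eval C (.up ℤ) (j + 1)
    exact (isColimitOfHasCoproductOfPreservesColimit E fun _ : K ⟶ L => K).hom_ext
      fun _ => hK.eq_of_src _ _
  refine ⟨(mappingCone.snd (evalMap K L)).v j j (add_zero j), mappingCone.inr_f_snd_v _ _, ?_⟩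
  have id_eq := mappingCone.id_X (evalMap K L) j (j + 1) rfl
  rwa [hcop.eq_of_tgt ((mappingCone.fst (evalMap K L)).1.v j (j + 1) rfl) 0,
    zero_comp, zero_add] at id_eq

variable [HasDerivedCategory.{w} C]

lemma exists_distTriang_evalCone : ∃ h : Q.obj (evalCone K L) ⟶ _,
    Triangle.mk (Q.map (evalMap K L)) (Q.map (evalConeInr K L)) h ∈
      distTriang (DerivedCategory C) :=
  ⟨_, mappingCone_triangle_distinguished (evalMap K L)⟩

variable {K L}

lemma exists_comp_evalConeInr_eq {U : DerivedCategory C}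
    [Subsingleton (U ⟶ (Q.obj (∐ fun _ : K ⟶ L => K))⟦(1 : ℤ)⟧)] (f : U ⟶ Q.obj (evalCone K L)) :
    ∃ g : U ⟶ Q.obj L, f = g ≫ Q.map (evalConeInr K L) := by
  obtain ⟨h, hT⟩ := exists_distTriang_evalCone K L
  exact Triangle.coyoneda_exact₃ _ hT f
    (Subsingleton.elim (α := U ⟶ (Q.obj (∐ fun _ : K ⟶ L => K))⟦(1 : ℤ)⟧) _ _)

lemma Q_map_comp_evalConeInr (g : K ⟶ L) : Q.map g ≫ Q.map (evalConeInr K L) = 0 := by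
  obtain ⟨h, hT⟩ := exists_distTriang_evalCone K L
  have hcomp : Q.map (evalMap K L) ≫ Q.map (evalConeInr K L) = 0 :=
    comp_distTriang_mor_zero₁₂ _ hT
  have hg : g = Sigma.ι (fun _ : K ⟶ L => K) g ≫ evalMap K L := by simp [evalMap]
  rw [hg, Functor.map_comp, Category.assoc, hcomp, comp_zero]

lemma subsingleton_hom_evalCone {U : DerivedCategory C} [Subsingleton (U ⟶ Q.obj L)]
    [Subsingleton (U ⟶ (Q.obj (∐ fun _ : K ⟶ L => K))⟦(1 : ℤ)⟧)] :
    Subsingleton (U ⟶ Q.obj (evalCone K L)) := by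
  refine subsingleton_of_forall_eq 0 fun f => ?_
  obtain ⟨g, rfl⟩ := exists_comp_evalConeInr_eq f
  rw [Subsingleton.elim g 0, zero_comp]

lemma subsingleton_Q_obj_hom_evalCone [K.IsKProjective]
    [Subsingleton (Q.obj K ⟶ (Q.obj (∐ fun _ : K ⟶ L => K))⟦(1 : ℤ)⟧)] :
    Subsingleton (Q.obj K ⟶ Q.obj (evalCone K L)) := by
  refine subsingleton_of_forall_eq 0 fun f => ?_
  obtain ⟨g, rfl⟩ := exists_comp_evalConeInr_eq f
  obtain ⟨g, rfl⟩ := exists_Q_map_eq g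
  exact Q_map_comp_evalConeInr g

lemma exists_evalConeInr_comp_eq [K.IsKProjective] {X : DerivedCategory C}
    [Subsingleton (Q.obj K ⟶ X)] (f : Q.obj L ⟶ X) :
    ∃ g : Q.obj (evalCone K L) ⟶ X, f = Q.map (evalConeInr K L) ≫ g := by
  obtain ⟨h, hT⟩ := exists_distTriang_evalCone K L
  have := subsingleton_Q_obj_sigma_hom (fun _ : K ⟶ L => K) X
  exact Triangle.yoneda_exact₂ _ hT f
    (Subsingleton.elim (α := Q.obj (∐ fun _ : K ⟶ L => K) ⟶ X) _ _)

end EvalCone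

section EvalTower

open DerivedCategory CochainComplex

universe w v u'

lemma isEventuallyConstantFrom_of_isIso_map_succ {D : Type*} [Category* D] (F : ℕ ⥤ D) (m : ℕ)
    (hF : ∀ k, m ≤ k → IsIso (F.map (homOfLE k.le_succ))) : F.IsEventuallyConstantFrom m := by
  intro k f
  induction k, leOfHom f using Nat.le_induction with
  | base => rw [Subsingleton.elim f (𝟙 m), F.map_id]; infer_instance
  | succ k hmk ih =>
    have := ih (homOfLE hmk)
    have := hF k hmk
    rw [Subsingleton.elim f (homOfLE hmk ≫ homOfLE k.le_succ), F.map_comp]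
    infer_instance

variable {C : Type u'} [Category.{v} C] [Abelian C] [HasCoproducts.{v} C]
  (K : ℕ → CochainComplex C ℤ) (L : CochainComplex C ℤ)

/-- The complexes obtained from `L` by killing successively the morphisms from `K 0`, `K 1`, ... -/
noncomputable def evalTower : ℕ → CochainComplex C ℤ
  | 0 => L
  | m + 1 => evalCone (K m) (evalTower m)

/-- The sequence `evalTower K L` as a diagram of inclusions. -/
noncomputable def evalTowerFunctor : ℕ ⥤ CochainComplex C ℤ :=
  Functor.ofSequence fun m => evalConeInr (K m) (evalTower K L m)

/-- The colimit of the sequence `evalTower K L`. -/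
noncomputable def evalTowerColimit [HasColimitsOfShape ℕ C] : CochainComplex C ℤ :=
  colimit (evalTowerFunctor K L)

/-- The canonical morphism from the `m`-th stage of the tower to its colimit. -/
noncomputable def evalTowerι [HasColimitsOfShape ℕ C] (m : ℕ) :
    evalTower K L m ⟶ evalTowerColimit K L :=
  colimit.ι (evalTowerFunctor K L) m

lemma isIso_evalTowerι_f [HasColimitsOfShape ℕ C] (m : ℕ) (j : ℤ)
    (hK : ∀ k, m ≤ k → IsZero ((K k).X (j + 1))) : IsIso ((evalTowerι K L m).f j) := by
  let E := HomologicalComplex.eval C (.up ℤ) j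
  have hconst : (evalTowerFunctor K L ⋙ E).IsEventuallyConstantFrom m := by
    refine isEventuallyConstantFrom_of_isIso_map_succ _ m fun k hk => ?_
    have hsucc : (evalTowerFunctor K L).map (homOfLE k.le_succ) =
        evalConeInr (K k) (evalTower K L k) := Functor.ofSequence_map_homOfLE_succ _ _
    rw [Functor.comp_map, hsucc]
    exact isIso_evalConeInr_f _ _ j (hK k hk)
  exact hconst.isIso_ι_of_isColimit (isColimitOfPreserves E (colimit.isColimit _))

lemma exists_factorization_through_evalTower [HasDerivedCategory.{w} C] [∀ m, (K m).IsKProjective]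
    {X : DerivedCategory C} [∀ m, Subsingleton (Q.obj (K m) ⟶ X)] (f : Q.obj L ⟶ X) (m : ℕ) :
    ∃ (i : Q.obj L ⟶ Q.obj (evalTower K L m)) (r : Q.obj (evalTower K L m) ⟶ X), i ≫ r = f := by
  induction m with
  | zero => exact ⟨𝟙 _, f, Category.id_comp _⟩
  | succ m ih =>
    obtain ⟨i, r, rfl⟩ := ih
    obtain ⟨r', rfl⟩ := exists_evalConeInr_comp_eq (K := K m) r
    exact ⟨i ≫ Q.map (evalConeInr (K m) _), r', Category.assoc _ _ _⟩

end EvalTower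

section Silting

open DerivedCategory TStructure

universe w v u'

variable {C : Type u'} [Category.{v} C] [Abelian C]

/-- The sequence of shifts `P[s]`, `P[s+1]`, ... -/
abbrev shiftsFrom (P : CochainComplex C ℤ) (s : ℤ) (m : ℕ) : CochainComplex C ℤ := P⟦s + (m : ℤ)⟧

lemma isIso_evalTowerι_shiftsFrom_f [HasCoproducts.{v} C] [HasColimitsOfShape ℕ C]
    (P : CochainComplex C ℤ) (b : ℤ) [P.IsStrictlyLE b] (s : ℤ) (L : CochainComplex C ℤ)
    (m : ℕ) (j : ℤ) (hj : b - (s + m) ≤ j) :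
    IsIso ((evalTowerι (shiftsFrom P s) L m).f j) :=
  isIso_evalTowerι_f _ L m j fun k hk => P.isZero_of_isStrictlyLE b (j + 1 + (s + k))

variable [HasDerivedCategory.{w} C]

/-- The adjunction bijection `Hom(P[i], X) ≃ Hom(P, X[j])` for `i + j = 0`. -/
noncomputable def shiftHomEquiv (P : CochainComplex C ℤ) (X : DerivedCategory C) (i j : ℤ)
    (hij : i + j = 0) : (Q.obj (P⟦i⟧) ⟶ X) ≃ (Q.obj P ⟶ X⟦j⟧) :=
  (Iso.homCongr ((Q.commShiftIso i).app P) (Iso.refl X)).trans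
    ((shiftEquiv' (DerivedCategory C) i j hij).toAdjunction.homEquiv (Q.obj P) X)

lemma subsingleton_hom_shift_of_isLE (P : CochainComplex C ℤ) [P.IsKProjective] (a m i : ℤ)
    [P.IsStrictlyGE a] (X : DerivedCategory C) [X.IsLE m] (hi : m + i < a) :
    Subsingleton (Q.obj (P⟦i⟧) ⟶ X) := by
  have := P.isStrictlyGE_shift a i (a - i) (by lia)
  exact subsingleton_Q_obj_hom_of_isStrictlyGE_of_isLE _ (a - i) m (by lia) X

variable [HasCoproducts.{v} C]

/-- A complex `P` is silting if it generates the derived category and has no nonzero morphisms to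
the positive shifts of coproducts of copies of itself. The coproducts are formed in the category of
complexes: they compute those of the derived category when `P` is K-projective, which is the only
case where this notion is used. -/
structure IsSilting (P : CochainComplex C ℤ) : Prop where
  rigid (Λ : Type v) (j : ℤ) (hj : 0 < j) :
    Subsingleton (Q.obj P ⟶ (Q.obj (∐ fun _ : Λ => P))⟦j⟧)
  generates (X : DerivedCategory C) (hX : ∀ i : ℤ, Subsingleton (Q.obj P ⟶ X⟦i⟧)) : IsZero X

variable {P : CochainComplex C ℤ}

namespace IsSilting

lemma isZero_of_subsingleton_hom (hP : IsSilting P) (X : DerivedCategory C)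
    (hX : ∀ i : ℤ, Subsingleton (Q.obj (P⟦i⟧) ⟶ X)) : IsZero X :=
  hP.generates X fun i => (shiftHomEquiv P X (-i) i (by lia)).subsingleton_congr.1 (hX (-i))

lemma subsingleton_hom_sigma_shift (hP : IsSilting P) (Λ : Type v) {i k : ℤ} (hik : i ≤ k) :
    Subsingleton (Q.obj (P⟦i⟧) ⟶ (Q.obj (∐ fun _ : Λ => P⟦k⟧))⟦(1 : ℤ)⟧) := by
  have := hP.rigid Λ (k + 1 - i) (by lia)
  rw [(shiftHomEquiv P _ i (-i) (by lia)).subsingleton_congr]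
  let e : Q.obj (∐ fun _ : Λ => P⟦k⟧) ≅ (Q.obj (∐ fun _ : Λ => P))⟦k⟧ :=
    Q.mapIso (PreservesCoproduct.iso (shiftFunctor (CochainComplex C ℤ) k) _).symm ≪≫
      (Q.commShiftIso k).app _
  let e' : (Q.obj (∐ fun _ : Λ => P⟦k⟧))⟦(1 : ℤ)⟧⟦-i⟧ ≅
      (Q.obj (∐ fun _ : Λ => P))⟦k + 1 - i⟧ :=
    (shiftFunctor _ (-i)).mapIso ((shiftFunctor _ (1 : ℤ)).mapIso e ≪≫
      ((shiftFunctorAdd' _ k 1 (k + 1) rfl).app _).symm) ≪≫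
      ((shiftFunctorAdd' _ (k + 1) (-i) (k + 1 - i) (by lia)).app _).symm
  exact (Iso.homCongr (Iso.refl _) e').subsingleton

lemma subsingleton_hom_evalTower [P.IsKProjective] (hP : IsSilting P) (s : ℤ)
    (L : CochainComplex C ℤ) (hL : ∀ i < s, Subsingleton (Q.obj (P⟦i⟧) ⟶ Q.obj L)) (m : ℕ) :
    ∀ i < s + m, Subsingleton (Q.obj (P⟦i⟧) ⟶ Q.obj (evalTower (shiftsFrom P s) L m)) := by
  induction m with
  | zero => simpa [evalTower] using hL
  | succ m ih =>
    intro i hi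
    have hle : i ≤ s + m := by push_cast at hi; lia
    have := hP.subsingleton_hom_sigma_shift
      (shiftsFrom P s m ⟶ evalTower (shiftsFrom P s) L m) hle
    rcases hle.lt_or_eq with hlt | rfl
    · have := ih i hlt
      exact subsingleton_hom_evalCone
    · exact subsingleton_Q_obj_hom_evalCone

lemma isZero_Q_obj_evalTowerColimit [HasColimitsOfShape ℕ C] [P.IsKProjective] (a b : ℤ)
    [P.IsStrictlyGE a] [P.IsStrictlyLE b] (hP : IsSilting P) (s : ℤ)
    (L : CochainComplex C ℤ) (hL : ∀ i < s, Subsingleton (Q.obj (P⟦i⟧) ⟶ Q.obj L)) :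
    IsZero (Q.obj (evalTowerColimit (shiftsFrom P s) L)) := by
  refine hP.isZero_of_subsingleton_hom _ fun i => subsingleton_of_forall_eq 0 fun f => ?_
  obtain ⟨g, rfl⟩ := exists_Q_map_eq f
  obtain ⟨m, him, hbm⟩ : ∃ m : ℕ, i < s + m ∧ b - (s + m) ≤ a - i :=
    ⟨(max (i - s + 1) (b - a + i - s)).toNat, by lia⟩
  have := P.isStrictlyGE_shift a i (a - i) (by lia)
  obtain ⟨g, rfl⟩ := exists_lift_of_isStrictlyGE (a - i) (evalTowerι _ L m)
    (fun j hj => isIso_evalTowerι_shiftsFrom_f P b s L m j (hbm.trans hj)) g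
  have := hP.subsingleton_hom_evalTower s L hL m i him
  rw [Functor.map_comp, Subsingleton.elim (Q.map g) 0, zero_comp]

theorem isLE_of_subsingleton_hom [HasColimitsOfShape ℕ C] [P.IsKProjective] (a b : ℤ)
    [P.IsStrictlyGE a] [P.IsStrictlyLE b] (hP : IsSilting P) (s : ℤ)
    (X : DerivedCategory C) (hX : ∀ i < s, Subsingleton (Q.obj (P⟦i⟧) ⟶ X)) :
    X.IsLE (b - s) := by
  let e := Q.objObjPreimageIso X
  let ι := evalTowerι (shiftsFrom P s) (Q.objPreimage X) 0
  have hcolim := hP.isZero_Q_obj_evalTowerColimit a b s (Q.objPreimage X) fun i hi =>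
    (Iso.homCongr (Iso.refl _) e).subsingleton_congr.2 (hX i hi)
  suffices h : (Q.obj (Q.objPreimage X)).IsLE (b - s) from t.isLE_of_iso e _
  rw [isLE_Q_obj_iff, CochainComplex.isLE_iff]
  intro i hi
  have hι (j : ℤ) (hj : b - s ≤ j) : IsIso (ι.f j) :=
    isIso_evalTowerι_shiftsFrom_f P b s _ 0 j (by simpa using hj)
  have := hι (i - 1) (by lia)
  have := hι i (by lia)
  have := hι (i + 1) (by lia)
  have hιi : IsIso (HomologicalComplex.homologyMap ι i) :=
    (quasiIsoAt_iff_isIso_homologyMap _ _).1 (quasiIsoAt_of_isIso_f ι i)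
  rw [HomologicalComplex.exactAt_iff_isZero_homology]
  exact ((Functor.map_isZero (homologyFunctor C i) hcolim).of_iso
    ((homologyFunctorFactors C i).symm.app _)).of_iso (@asIso _ _ _ _ _ hιi)

theorem isGE_of_subsingleton_hom [HasColimitsOfShape ℕ C] [P.IsKProjective] (a b : ℤ)
    [P.IsStrictlyGE a] [P.IsStrictlyLE b] (hP : IsSilting P)
    (X : DerivedCategory C) (hX : ∀ i : ℤ, 0 < i → Subsingleton (Q.obj (P⟦i⟧) ⟶ X)) : X.IsGE a := by
  let Y := (t.truncLT a).obj X
  have hYLE : t.IsLE Y (a - 1) := t.isLE_truncLT_obj X a (a - 1)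
  let e := Q.objObjPreimageIso Y
  have hL : ∀ i : ℤ, i < 1 → Subsingleton (Q.obj (P⟦i⟧) ⟶ Q.obj (Q.objPreimage Y)) := fun i hi => by
    rw [(Iso.homCongr (Iso.refl _) e).subsingleton_congr]
    exact subsingleton_hom_shift_of_isLE P a (a - 1) i Y (by lia)
  have (m : ℕ) : Subsingleton (Q.obj (shiftsFrom P 1 m) ⟶ X) := hX (1 + m) (by lia)
  suffices hY : IsZero Y from (t.isGE_iff_isZero_truncLT_obj a X).2 hY
  refine hP.isZero_of_subsingleton_hom Y fun i => subsingleton_of_forall_eq 0 fun f => ?_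
  obtain ⟨m, him, hbm⟩ : ∃ m : ℕ, i < 1 + m ∧ b - (1 + m) ≤ a - 1 :=
    ⟨(max i (b - a)).toNat, by lia⟩
  obtain ⟨u, r, hur⟩ := exists_factorization_through_evalTower (X := X) (shiftsFrom P 1)
    (Q.objPreimage Y) (e.hom ≫ (t.truncLTι a).app X) m
  have hstage := hP.subsingleton_hom_evalTower 1 (Q.objPreimage Y) hL m
  have := hP.isLE_of_subsingleton_hom a b (1 + m) _ hstage
  have : t.IsLE (Q.obj (evalTower (shiftsFrom P 1) (Q.objPreimage Y) m)) (a - 1) :=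
    t.isLE_of_le _ (b - (1 + m)) (a - 1) hbm
  have retract : e.inv ≫ u ≫ t.liftTruncLT r (a - 1) a (by lia) = 𝟙 Y :=
    t.to_truncLT_obj_ext (by simp [hur])
  have := hstage i him
  rw [← Category.comp_id f, ← retract, ← Category.assoc, ← Category.assoc,
    Subsingleton.elim ((f ≫ e.inv) ≫ u) 0, zero_comp]

end IsSilting

end Silting

section Coproducts

open DerivedCategory

universe w w' v u'

variable {C : Type u'} [Category.{v} C] {Λ : Type w'} [HasCoproductsOfShape Λ C]

variable (C Λ) in
/-- The functor `X ↦ X^{(Λ)}`, as a composition of functors which preserve finite limits when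
coproducts indexed by `Λ` are exact. -/
noncomputable def copower : C ⥤ C := Functor.const (Discrete Λ) ⋙ colim

/-- The injection of the summand of index `l` in a copower. -/
noncomputable def copowerι (l : Λ) (X : C) : X ⟶ (copower C Λ).obj X :=
  colimit.ι ((Functor.const (Discrete Λ)).obj X) ⟨l⟩

lemma copowerι_naturality (l : Λ) {X Y : C} (f : X ⟶ Y) :
    copowerι l X ≫ (copower C Λ).map f = f ≫ copowerι l Y :=
  ι_colimMap ((Functor.const (Discrete Λ)).map f) ⟨l⟩

/-- The copower of `X` is a coproduct of copies of `X`. -/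
noncomputable def isColimitCopower (X : C) :
    IsColimit (Cofan.mk ((copower C Λ).obj X) fun l => copowerι l X) :=
  have fac (s : Cofan fun _ : Λ => X) (l : Discrete Λ) :=
    colimit.ι_desc (F := (Functor.const (Discrete Λ)).obj X)
      ⟨s.pt, Discrete.natTrans fun l => s.inj l.as⟩ l
  Cofan.IsColimit.mk _ (fun _ => colimit.desc _ _) (fun s l => fac s ⟨l⟩)
    fun s _ hf => colimit.hom_ext fun l => (hf l.as).trans (fac s l).symm

variable [Abelian C]

instance : (copower C Λ).Additive where
  map_add {X _ _ _} := (isColimitCopower X).hom_ext fun _ => by simp [copowerι_naturality]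

instance [HasExactColimitsOfShape (Discrete Λ) C] : (copower C Λ).PreservesHomology := by
  unfold copower
  infer_instance

/-- Copowers of complexes are computed degreewise. -/
noncomputable def sigmaIsoMapCopower (K : CochainComplex C ℤ) :
    ∐ (fun _ : Λ => K) ≅ ((copower C Λ).mapHomologicalComplex (.up ℤ)).obj K :=
  let c : Cofan fun _ : Λ => K := Cofan.mk (((copower C Λ).mapHomologicalComplex (.up ℤ)).obj K)
    fun l => { f i := copowerι l (K.X i), comm' _ _ _ := copowerι_naturality l _ }
  colimit.isoColimitCocone ⟨c, HomologicalComplex.isColimitOfEval _ _ fun i =>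
    (isColimitMapCoconeCofanMkEquiv _ _ _).symm (isColimitCopower (K.X i))⟩

variable [HasDerivedCategory.{w} C]

lemma nonempty_Q_obj_sigma_iso [HasExactColimitsOfShape (Discrete Λ) C] {K L : CochainComplex C ℤ}
    (φ : K ⟶ L) [QuasiIso φ] :
    Nonempty (Q.obj (∐ fun _ : Λ => K) ≅ Q.obj (∐ fun _ : Λ => L)) :=
  ⟨Q.mapIso (sigmaIsoMapCopower K) ≪≫
    asIso (Q.map (((copower C Λ).mapHomologicalComplex (.up ℤ)).map φ)) ≪≫
    Q.mapIso (sigmaIsoMapCopower L).symm⟩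

end Coproducts

section Resolution

open DerivedCategory

universe w w' v u'

variable {C : Type u'} [Category.{v} C] [Abelian C] {X : C} (R : ProjectiveResolution X)

lemma isStrictlyGE_cochainComplex (n : ℕ) (hR : ∀ i, n < i → IsZero (R.complex.X i)) :
    R.cochainComplex.IsStrictlyGE (-n) := by
  rw [CochainComplex.isStrictlyGE_iff]
  intro i hi
  obtain ⟨k, rfl⟩ := Int.exists_eq_neg_ofNat (by lia : i ≤ 0)
  exact (hR k (by lia)).of_iso (R.cochainComplexXIso (-k) k)

variable [HasDerivedCategory.{w} C]

/-- The identification of an object with its projective resolution in the derived category. -/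
noncomputable def singleIsoQObjCochainComplex :
    (singleFunctor C 0).obj X ≅ Q.obj R.cochainComplex :=
  (singleFunctorIsoCompQ C 0).app X ≪≫ (asIso (Q.map R.π')).symm

lemma nonempty_Q_obj_sigma_cochainComplex_iso (Λ : Type*) [HasCoproductsOfShape Λ C]
    [HasExactColimitsOfShape (Discrete Λ) C] :
    Nonempty (Q.obj (∐ fun _ : Λ => R.cochainComplex) ≅
      (singleFunctor C 0).obj (∐ fun _ : Λ => X)) := by
  obtain ⟨e⟩ := nonempty_Q_obj_sigma_iso (Λ := Λ) R.π'
  exact ⟨e ≪≫ Q.mapIso (PreservesCoproduct.iso (HomologicalComplex.single C (.up ℤ) 0) _).symm ≪≫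
    ((singleFunctorIsoCompQ C 0).app _).symm⟩

lemma isSilting_cochainComplex [HasExt.{w'} C] [HasCoproducts.{v} C] [AB4 C] (n : ℕ)
    (hR : ∀ i, n < i → IsZero (R.complex.X i))
    (hrigid : ∀ (i : ℕ), 0 < i → i ≤ n → ∀ Λ : Type v,
      Subsingleton (Abelian.Ext X (∐ fun _ : Λ => X) i))
    (hgen : ∀ Y : DerivedCategory C,
      (∀ i : ℤ, Subsingleton ((singleFunctor C 0).obj X ⟶ Y⟦i⟧)) → IsZero Y) :
    IsSilting R.cochainComplex where
  rigid Λ j hj := by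
    obtain ⟨e⟩ := nonempty_Q_obj_sigma_cochainComplex_iso R Λ
    lift j to ℕ using hj.le
    rw [(Iso.homCongr (Iso.refl _) ((shiftFunctor _ (j : ℤ)).mapIso e)).subsingleton_congr]
    rcases le_or_gt j n with hjn | hnj
    · have := hrigid j (by lia) hjn Λ
      rw [(Iso.homCongr (singleIsoQObjCochainComplex R).symm (Iso.refl _)).subsingleton_congr]
      exact (Abelian.Ext.homEquiv (X := X) (Y := ∐ fun _ : Λ => X) (n := j)).symm.subsingleton
    · have := isStrictlyGE_cochainComplex R n hR
      rw [← (shiftHomEquiv _ _ (-j : ℤ) j (by lia)).subsingleton_congr]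
      exact subsingleton_hom_shift_of_isLE _ (-n) 0 (-j) _ (by lia)
  generates Y hY := hgen Y fun i =>
    (Iso.homCongr (singleIsoQObjCochainComplex R) (Iso.refl _)).subsingleton_congr.2 (hY i)

end Resolution

section Inclusions

open DerivedCategory TStructure

universe w v u'

variable {C : Type u'} [Category.{v} C] [Abelian C] [HasDerivedCategory.{w} C]

theorem stmt15_general [HasCoproducts.{v} C] [HasColimitsOfShape ℕ C] {P : CochainComplex C ℤ}
    [P.IsKProjective] (a b : ℤ) [P.IsStrictlyGE a] [P.IsStrictlyLE b] (hP : IsSilting P)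
    {S : DerivedCategory C} (e : S ≅ Q.obj P) :
    (∀ X : DerivedCategory C, X.IsLE a → ∀ i : ℤ, 0 < i → Subsingleton (S ⟶ X⟦i⟧)) ∧
    (∀ X : DerivedCategory C, (∀ i : ℤ, 0 < i → Subsingleton (S ⟶ X⟦i⟧)) → X.IsLE b) ∧
    (∀ X : DerivedCategory C, X.IsGE b → ∀ i : ℤ, i < 0 → Subsingleton (S ⟶ X⟦i⟧)) ∧
    (∀ X : DerivedCategory C, (∀ i : ℤ, i < 0 → Subsingleton (S ⟶ X⟦i⟧)) → X.IsGE a) := by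
  have hom_iff (X : DerivedCategory C) (i j : ℤ) (hij : i + j = 0) :
      Subsingleton (Q.obj (P⟦i⟧) ⟶ X) ↔ Subsingleton (S ⟶ X⟦j⟧) :=
    ((shiftHomEquiv P X i j hij).trans (Iso.homCongr e.symm (Iso.refl _))).subsingleton_congr
  refine ⟨fun X hX i hi => ?_, fun X hX => ?_, fun X hX i hi => ?_, fun X hX => ?_⟩
  · exact (hom_iff X (-i) i (by lia)).1 (subsingleton_hom_shift_of_isLE P a a (-i) X (by lia))
  · rw [← sub_zero b]
    exact hP.isLE_of_subsingleton_hom a b 0 X fun i hi =>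
      (hom_iff X i (-i) (by lia)).2 (hX (-i) (by lia))
  · have : t.IsLE S b := t.isLE_of_iso e.symm b
    have : t.IsGE (X⟦i⟧) (b - i) := t.isGE_shift X b i (b - i)
    exact subsingleton_of_forall_eq 0 fun f => t.zero f b (b - i)
  · exact hP.isGE_of_subsingleton_hom a b X fun i hi =>
      (hom_iff X i (-i) (by lia)).2 (hX (-i) (by lia))

end Inclusions

lemma IsTilting.exists_isSilting {n : ℕ} (hT : IsTilting A T n) :
    ∃ P : CochainComplex (ModuleCat.{u} A) ℤ, P.IsKProjective ∧ P.IsStrictlyGE (-n) ∧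
      P.IsStrictlyLE 0 ∧ IsSilting P ∧ Nonempty (Tsingle A T ≅ DerivedCategory.Q.obj P) := by
  obtain ⟨R, hR⟩ := hT.pdim
  classical
  let sigmaIso (Λ : Type u) : ModuleCat.of A (Λ →₀ T) ≅ ∐ fun _ : Λ => ModuleCat.of A T :=
    (finsuppLEquivDirectSum A T Λ).toModuleIso ≪≫
      (ModuleCat.coprodIsoDirectSum fun _ : Λ => ModuleCat.of A T).symm
  refine ⟨R.cochainComplex, inferInstance, isStrictlyGE_cochainComplex R n hR, inferInstance,
    isSilting_cochainComplex R n hR (fun i hi hin Λ => ?_) (fun X hX => ?_),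
    ⟨singleIsoQObjCochainComplex R⟩⟩
  · have := hT.rigid i hi hin Λ
    let extEquiv : Abelian.Ext (ModuleCat.of A T) (ModuleCat.of A (Λ →₀ T)) i ≃+
        Abelian.Ext (ModuleCat.of A T) (∐ fun _ : Λ => ModuleCat.of A T) i :=
      ((Abelian.extFunctorObj (ModuleCat.of A T) i).mapIso (sigmaIso Λ)).addCommGroupIsoToAddEquiv
    exact extEquiv.symm.toEquiv.subsingleton
  · exact hT.generates X fun i f => (hX i).elim f 0

/-- For an `n`-tilting module `T`, the associated
t-structure satisfies `D^{≤-n} ⊆ T^{≤0} ⊆ D^{≤0}` and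
`D^{≥0} ⊆ T^{≥0} ⊆ D^{≥-n}`. -/
theorem stmt15 (n : ℕ) (hT : IsTilting A T n) :
    (∀ X : DA A, dLE A (-(n : ℤ)) X → tLE A T 0 X) ∧
    (∀ X : DA A, tLE A T 0 X → dLE A 0 X) ∧
    (∀ X : DA A, dGE A 0 X → tGE A T 0 X) ∧
    (∀ X : DA A, tGE A T 0 X → dGE A (-(n : ℤ)) X) := by
  obtain ⟨P, _, _, _, hP, ⟨e⟩⟩ := hT.exists_isSilting
  simpa only [DerivedCategory.isLE_iff, DerivedCategory.isGE_iff, dLE, dGE, tLE, tGE,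
    fun Y : DA A => subsingleton_iff_forall_eq (0 : Tsingle A T ⟶ Y)]
    using stmt15_general (-n) 0 hP e
end

section
/- Let A be an associative unital ring, T a 1-tilting left A-module and (T^{≤0}, T^{≥0}) the associated t-structure on D(A). If X ∈ T^{≤0}, then the usual zeroth cohomology module H^0(X) of the complex X satisfies Ext_A^1(T, H^0(X)) = 0. -/
set_option maxHeartbeats 1000000
set_option synthInstance.maxHeartbeats 400000
open CategoryTheory Limits Triangulated Pretriangulated
universe u
variable (A : Type u) [Ring A]
variable (T : Type u) [AddCommGroup T] [Module A T]

/-!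
Let `P` have projective dimension at most `1` and `Hom(P, X[1]) = 0`. Truncate `X` twice, by
triangles `Y ⟶ X ⟶ V` with `Y ∈ D^{≤0}`, `V ∈ D^{≥1}`, and `Z ⟶ Y ⟶ H⁰(X)` with `Z ∈ D^{≤-1}`.
Since `Hom(P, V) = 0`, the vanishing of `Hom(P, X[1])` passes to `Hom(P, Y[1])`, and since
`Hom(P, Z[2]) = 0`, it passes on to `Hom(P, H⁰(X)[1]) = Ext¹(P, H⁰(X))`.

For the vanishing of `Hom(P, Z[2])`, the complexes may be unbounded below, so one replaces a
complex in `D^{≤-n}` by its brutal truncation in degrees `≥ -n`. Chain maps from `P[0]` factor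
through it and its only cohomology is in degree `-n`, so that morphisms from `P` to `D^{≤-n}`
factor through elements of some `Extⁿ(P, M)`.
-/

section BrutalTruncation

open ComplexShape HomologicalComplex

variable {C ι ι' : Type*} [Category* C] {c : ComplexShape ι} {c' : ComplexShape ι'}

/-- The canonical projection of a complex onto its stupid (brutal) truncation along an embedding
`e` whose image is closed under predecessors, such as `embeddingUpIntLE n`. -/
noncomputable def stupidTruncProjection [HasZeroMorphisms C] [HasZeroObject C]
    (K : HomologicalComplex C c') (e : c.Embedding c') [e.IsTruncLE] : K ⟶ K.stupidTrunc e :=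
  e.liftExtend (𝟙 (K.restriction e)) fun _ hj ↦ hj.false_of_isTruncLE.elim

lemma isIso_stupidTruncProjection_f [HasZeroMorphisms C] [HasZeroObject C]
    (K : HomologicalComplex C c') (e : c.Embedding c') [e.IsTruncLE] (j : ι) :
    IsIso ((stupidTruncProjection K e).f (e.f j)) :=
  (e.isIso_liftExtend_f_iff _ _ rfl).2 inferInstance

lemma epi_stupidTruncProjection [Abelian C] (K : HomologicalComplex C c') (e : c.Embedding c')
    [e.IsTruncLE] : Epi (stupidTruncProjection K e) := by
  have (i' : ι') : Epi ((stupidTruncProjection K e).f i') := by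
    by_cases h : ∃ j, e.f j = i'
    · obtain ⟨j, rfl⟩ := h
      have := isIso_stupidTruncProjection_f K e j
      infer_instance
    · exact ⟨fun _ _ _ ↦ (K.isZero_stupidTrunc_X e i' (by simpa using h)).eq_of_src _ _⟩
  exact epi_of_epi_f _ this

lemma isStrictlySupportedOutside_kernel_stupidTruncProjection [Abelian C]
    (K : HomologicalComplex C c') (e : c.Embedding c') [e.IsTruncLE] :
    (kernel (stupidTruncProjection K e)).IsStrictlySupportedOutside e where
  isZero j := by
    have := isIso_stupidTruncProjection_f K e j
    have : Mono ((eval C c' (e.f j)).map (stupidTruncProjection K e)) :=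
      inferInstanceAs (Mono ((stupidTruncProjection K e).f (e.f j)))
    exact (isZero_kernel_of_mono _).of_iso
      (PreservesKernel.iso (eval C c' (e.f j)) (stupidTruncProjection K e))

lemma shortExact_stupidTruncProjection [Abelian C] (K : HomologicalComplex C c')
    (e : c.Embedding c') [e.IsTruncLE] :
    (ShortComplex.mk (kernel.ι (stupidTruncProjection K e)) (stupidTruncProjection K e)
      (kernel.condition _)).ShortExact :=
  have := epi_stupidTruncProjection K e
  .mk' (ShortComplex.exact_kernel _) inferInstance this

variable [Abelian C]

/-- The stupid (brutal) truncation `σ^{≥n} K`: the subcomplex of `K` made of its terms in degrees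
`≥ n`, encoded as the kernel of the projection of `K` onto `σ^{≤n-1} K`. -/
noncomputable abbrev stupidTruncGE (K : CochainComplex C ℤ) (n : ℤ) : CochainComplex C ℤ :=
  kernel (stupidTruncProjection K (embeddingUpIntLE (n - 1)))

instance isStrictlyGE_stupidTruncGE (K : CochainComplex C ℤ) (n : ℤ) :
    (stupidTruncGE K n).IsStrictlyGE n :=
  ((Embedding.embeddingUpInt_areComplementary (n - 1) n (by lia)).isStrictlySupportedOutside₁_iff
    (stupidTruncGE K n)).1 (isStrictlySupportedOutside_kernel_stupidTruncProjection K _)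

lemma exists_fac_stupidTruncGE {K L : CochainComplex C ℤ} {n : ℤ} [K.IsStrictlyGE n]
    (g : K ⟶ L) : ∃ k : K ⟶ stupidTruncGE L n, k ≫ kernel.ι _ = g := by
  refine ⟨kernel.lift _ g ?_, kernel.lift_ι _ _ _⟩
  ext i
  by_cases hi : i < n
  · exact (K.isZero_of_isStrictlyGE n i).eq_of_src _ _
  · exact (CochainComplex.isZero_of_isStrictlyLE (L.stupidTrunc (embeddingUpIntLE (n - 1)))
      (n - 1) i).eq_of_tgt _ _

end BrutalTruncation

lemma hasProjectiveDimensionLT_of_projectiveResolution {C : Type*} [Category* C] [Abelian C]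
    {P : C} (R : ProjectiveResolution P) (n : ℕ) (hR : ∀ i, n ≤ i → IsZero (R.complex.X i)) :
    HasProjectiveDimensionLT P n := by
  let := HasExt.standard C
  refine HasProjectiveDimensionLT.mk fun i hi Y e ↦ ?_
  obtain ⟨f, hf, rfl⟩ := R.extMk_surjective e (i + 1) rfl
  obtain rfl : f = 0 := (hR i hi).eq_of_src _ _
  exact R.extMk_zero _ _

lemma hom_shift_obj₁_eq_zero {C : Type*} [Category* C] [HasZeroObject C] [HasShift C ℤ]
    [Preadditive C] [∀ n : ℤ, (shiftFunctor C n).Additive] [Pretriangulated C]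
    {Δ : Triangle C} (hΔ : Δ ∈ distTriang C) {X : C} (h₃ : ∀ g : X ⟶ Δ.obj₃, g = 0)
    (h₂ : ∀ g : X ⟶ Δ.obj₂⟦(1 : ℤ)⟧, g = 0) (f : X ⟶ Δ.obj₁⟦(1 : ℤ)⟧) : f = 0 := by
  obtain ⟨g, rfl⟩ := Δ.coyoneda_exact₁ hΔ f (h₂ _)
  rw [h₃ g, zero_comp]

section DerivedCategory

open ComplexShape DerivedCategory DerivedCategory.TStructure

variable {C : Type*} [Category* C] [Abelian C] [HasDerivedCategory C]

section Triangle

variable {Δ : Triangle (DerivedCategory C)} (hΔ : Δ ∈ distTriang _) (n : ℤ)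

include hΔ

lemma isLE_obj₁_of_distTriang (h₂ : Δ.obj₂.IsLE n) (h₃ : Δ.obj₃.IsLE (n - 1)) : Δ.obj₁.IsLE n :=
  t.isLE₂ _ (inv_rot_of_distTriang _ hΔ) n (t.isLE_shift Δ.obj₃ (n - 1) (-1) n) h₂

lemma isLE_obj₃_of_distTriang (h₁ : Δ.obj₁.IsLE (n + 1)) (h₂ : Δ.obj₂.IsLE n) : Δ.obj₃.IsLE n :=
  t.isLE₂ _ (rot_of_distTriang _ hΔ) n h₂ (t.isLE_shift Δ.obj₁ (n + 1) 1 n)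

lemma isIso_homologyMap_mor₁ (h₃ : Δ.obj₃.IsGE (n + 1)) :
    IsIso ((homologyFunctor C n).map Δ.mor₁) := by
  have : Mono ((homologyFunctor C n).map Δ.mor₁) :=
    (HomologySequence.mono_homologyMap_mor₁_iff Δ hΔ (n - 1) n).2
      ((isZero_of_isGE Δ.obj₃ (n + 1) (n - 1) (by lia)).eq_of_src _ _)
  have : Epi ((homologyFunctor C n).map Δ.mor₁) :=
    (HomologySequence.epi_homologyMap_mor₁_iff Δ hΔ n).2
      ((isZero_of_isGE Δ.obj₃ (n + 1) n (by lia)).eq_of_tgt _ _)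
  exact isIso_of_mono_of_epi _

lemma isIso_homologyMap_mor₂ (h₁ : Δ.obj₁.IsLE (n - 1)) :
    IsIso ((homologyFunctor C n).map Δ.mor₂) := by
  have : Mono ((homologyFunctor C n).map Δ.mor₂) :=
    (HomologySequence.mono_homologyMap_mor₂_iff Δ hΔ n).2
      ((isZero_of_isLE Δ.obj₁ (n - 1) n (by lia)).eq_of_src _ _)
  have : Epi ((homologyFunctor C n).map Δ.mor₂) :=
    (HomologySequence.epi_homologyMap_mor₂_iff Δ hΔ n (n + 1)).2
      ((isZero_of_isLE Δ.obj₁ (n - 1) (n + 1) (by lia)).eq_of_tgt _ _)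
  exact isIso_of_mono_of_epi _

lemma nonempty_obj₃_iso_singleFunctor_homology_obj₂ (h₁ : Δ.obj₁.IsLE (n - 1))
    (h₂ : Δ.obj₂.IsLE n) (h₃ : Δ.obj₃.IsGE n) :
    Nonempty (Δ.obj₃ ≅ (singleFunctor C n).obj ((homologyFunctor C n).obj Δ.obj₂)) := by
  have := isIso_homologyMap_mor₂ hΔ n h₁
  have := isLE_obj₃_of_distTriang hΔ n (t.isLE_of_le Δ.obj₁ (n - 1) (n + 1)) h₂
  obtain ⟨M, ⟨e⟩⟩ := exists_iso_singleFunctor_obj_of_isGE_of_isLE Δ.obj₃ n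
  exact ⟨e ≪≫ (singleFunctor C n).mapIso (asIso ((homologyFunctor C n).map Δ.mor₂) ≪≫
    (homologyFunctor C n).mapIso e ≪≫ (singleFunctorCompHomologyFunctorIso C n).app M).symm⟩

end Triangle

variable {P : C}

lemma hom_singleFunctor_eq_zero (n : ℕ) [HasProjectiveDimensionLT P n] {M : C}
    (f : (singleFunctor C 0).obj P ⟶ (singleFunctor C (-n)).obj M) : f = 0 := by
  have := hasExt_of_hasDerivedCategory C
  have := HasProjectiveDimensionLT.subsingleton P n n le_rfl M
  have : Subsingleton ((singleFunctor C 0).obj P ⟶ ((singleFunctor C 0).obj M)⟦(n : ℤ)⟧) :=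
    Abelian.Ext.homEquiv.symm.subsingleton
  let e : ((singleFunctor C 0).obj M)⟦(n : ℤ)⟧ ≅ (singleFunctor C (-n)).obj M :=
    ((singleFunctors C).shiftIso n (-n) 0 (by simp)).app M
  rw [← cancel_mono e.inv]
  exact Subsingleton.elim _ _

lemma isLE_Q_obj_stupidTruncGE (L : CochainComplex C ℤ) (n : ℤ) (hL : (Q.obj L).IsLE n) :
    (Q.obj (stupidTruncGE L n)).IsLE n :=
  isLE_obj₁_of_distTriang (triangleOfSES_distinguished (shortExact_stupidTruncProjection L _)) n hL
    (inferInstanceAs ((Q.obj (L.stupidTrunc (embeddingUpIntLE (n - 1)))).IsLE (n - 1)))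

lemma exists_fac_singleFunctor {X Y : DerivedCategory C} (f : X ⟶ Y) (n : ℤ)
    [X.IsGE n] [Y.IsLE n] :
    ∃ (M : C) (g : X ⟶ (singleFunctor C n).obj M) (h : (singleFunctor C n).obj M ⟶ Y),
      f = g ≫ h := by
  obtain ⟨K, _, ⟨eX⟩⟩ := exists_iso_Q_obj_of_isGE X n
  obtain ⟨L, _, ⟨eY⟩⟩ := exists_iso_Q_obj_of_isLE Y n
  obtain ⟨L', g, s, hs, hgs⟩ := left_fac (eX.inv ≫ f ≫ eY.hom)
  have : (Q.obj (stupidTruncGE L' n)).IsLE n :=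
    isLE_Q_obj_stupidTruncGE L' n (t.isLE_of_iso (asIso (Q.map s)) n)
  obtain ⟨k, rfl⟩ := exists_fac_stupidTruncGE (n := n) g
  obtain ⟨M, ⟨e⟩⟩ := exists_iso_singleFunctor_obj_of_isGE_of_isLE (Q.obj (stupidTruncGE L' n)) n
  refine ⟨M, eX.hom ≫ Q.map k ≫ e.hom,
    e.inv ≫ Q.map (kernel.ι _) ≫ inv (Q.map s) ≫ eY.inv, ?_⟩
  rw [← cancel_epi eX.inv, ← cancel_mono eY.hom]
  simpa using hgs

lemma hom_eq_zero_of_isLE (n : ℕ) [HasProjectiveDimensionLT P n] {Y : DerivedCategory C}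
    (hY : Y.IsLE (-n)) (f : (singleFunctor C 0).obj P ⟶ Y) : f = 0 := by
  have : ((singleFunctor C 0).obj P).IsGE (-n) := t.isGE_of_ge _ (-n) 0
  obtain ⟨M, g, h, rfl⟩ := exists_fac_singleFunctor f (-n)
  rw [hom_singleFunctor_eq_zero n g, zero_comp]

lemma hom_shift_obj₃_eq_zero_of_isLE (n : ℕ) [HasProjectiveDimensionLT P n]
    {Δ : Triangle (DerivedCategory C)} (hΔ : Δ ∈ distTriang _) (h₁ : Δ.obj₁.IsLE (2 - n))
    (h₂ : ∀ g : (singleFunctor C 0).obj P ⟶ Δ.obj₂⟦(1 : ℤ)⟧, g = 0)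
    (f : (singleFunctor C 0).obj P ⟶ Δ.obj₃⟦(1 : ℤ)⟧) : f = 0 := by
  have : t.IsLE (Δ.obj₁⟦(1 : ℤ)⟧) (1 - n) := t.isLE_shift Δ.obj₁ (2 - n) 1 (1 - n)
  exact hom_shift_obj₁_eq_zero (rot_of_distTriang _ (rot_of_distTriang _ hΔ)) h₂
    (hom_eq_zero_of_isLE n (t.isLE_shift (Δ.obj₁⟦(1 : ℤ)⟧) (1 - n) 1 (-n))) f

lemma subsingleton_ext_one_of_iso [HasExt C] {Y : C} {W : DerivedCategory C}
    (e : W ≅ (singleFunctor C 0).obj Y)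
    (h : ∀ f : (singleFunctor C 0).obj P ⟶ W⟦(1 : ℤ)⟧, f = 0) :
    Subsingleton (Abelian.Ext P Y 1) := by
  refine ⟨fun a b ↦ Abelian.Ext.ext ?_⟩
  rw [← cancel_mono (e.inv⟦(1 : ℤ)⟧')]
  exact (h _).trans (h _).symm

theorem stmt16_general [HasExt C] (P : C) [HasProjectiveDimensionLE P 1]
    (X : DerivedCategory C) (hX : ∀ f : (singleFunctor C 0).obj P ⟶ X⟦(1 : ℤ)⟧, f = 0) :
    Subsingleton (Abelian.Ext P ((homologyFunctor C 0).obj X) 1) := by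
  obtain ⟨Y, V, hY, hV, f, _, _, hT⟩ := t.exists_triangle X 0 1 (by lia)
  obtain ⟨Z, W, hZ, hW, _, _, _, hT'⟩ := t.exists_triangle Y (-1) 0 (by lia)
  have hPY : ∀ g : (singleFunctor C 0).obj P ⟶ Y⟦(1 : ℤ)⟧, g = 0 :=
    hom_shift_obj₁_eq_zero hT (fun g ↦ t.zero_of_isLE_of_isGE g 0 1 (by lia) inferInstance ⟨hV⟩) hX
  have : t.IsLE Z (-1) := ⟨hZ⟩
  have hPW : ∀ g : (singleFunctor C 0).obj P ⟶ W⟦(1 : ℤ)⟧, g = 0 :=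
    hom_shift_obj₃_eq_zero_of_isLE 2 hT' (t.isLE_of_le Z (-1) _) hPY
  have : IsIso ((homologyFunctor C 0).map f) := isIso_homologyMap_mor₁ hT 0 ⟨hV⟩
  obtain ⟨e⟩ := nonempty_obj₃_iso_singleFunctor_homology_obj₂ hT' 0 ⟨hZ⟩ ⟨hY⟩ ⟨hW⟩
  let eH : (homologyFunctor C 0).obj Y ≅ (homologyFunctor C 0).obj X :=
    asIso ((homologyFunctor C 0).map f)
  exact subsingleton_ext_one_of_iso (e ≪≫ (singleFunctor C 0).mapIso eH) hPW

end DerivedCategory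

/-- For a 1-tilting module `T` and `X ∈ T^{≤0}`, the zeroth
cohomology of `X` satisfies `Ext_A^1(T, H^0(X)) = 0`. -/
theorem stmt16 (hT : IsTilting A T 1) (X : DA A) (hX : tLE A T 0 X) :
    Subsingleton (Abelian.Ext (ModuleCat.of A T)
      ((DerivedCategory.homologyFunctor (ModuleCat.{u} A) 0).obj X) 1) := by
  obtain ⟨R, hR⟩ := hT.pdim
  have := hasProjectiveDimensionLT_of_projectiveResolution R 2 hR
  exact stmt16_general _ X (hX 1 one_pos)
end
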